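/- Let ω : ℝ³ → ℝ³ be a smooth, compactly supported, divergence-free vector field (∇ · ω = 0), and define V : ℝ³ → ℝ³ by the Biot–Savart integral V(x) = −(1/4π) ∫_{ℝ³} ((x − x′) × ω(x′))/‖x − x′‖³ dx′. Then V is smooth, ∇ · V = 0 on ℝ³, and ∇ × V = ω on ℝ³. -/

import Mathlib

open MeasureTheory Real

/-- The standard basis vectors of `ℝ³`. -/
noncomputable def basis3 (i : Fin 3) : EuclideanSpace ℝ (Fin 3) :=
  EuclideanSpace.single i 1

/-- The cross product on `ℝ³`. -/
noncomputable def cross3 (a b : EuclideanSpace ℝ (Fin 3)) : EuclideanSpace ℝ (Fin 3) :=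
  (WithLp.equiv 2 (Fin 3 → ℝ)).symm
    ![a 1 * b 2 - a 2 * b 1, a 2 * b 0 - a 0 * b 2, a 0 * b 1 - a 1 * b 0]

/-- The divergence `∇ · V` of a vector field on `ℝ³`. -/
noncomputable def div3 (V : EuclideanSpace ℝ (Fin 3) → EuclideanSpace ℝ (Fin 3))
    (x : EuclideanSpace ℝ (Fin 3)) : ℝ :=
  ∑ i : Fin 3, fderiv ℝ V x (basis3 i) i

/-- The curl `∇ × V` of a vector field on `ℝ³`. -/
noncomputable def curl3 (V : EuclideanSpace ℝ (Fin 3) → EuclideanSpace ℝ (Fin 3))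
    (x : EuclideanSpace ℝ (Fin 3)) : EuclideanSpace ℝ (Fin 3) :=
  (WithLp.equiv 2 (Fin 3 → ℝ)).symm
    ![fderiv ℝ V x (basis3 1) 2 - fderiv ℝ V x (basis3 2) 1,
      fderiv ℝ V x (basis3 2) 0 - fderiv ℝ V x (basis3 0) 2,
      fderiv ℝ V x (basis3 0) 1 - fderiv ℝ V x (basis3 1) 0]


abbrev E3 := EuclideanSpace ℝ (Fin 3)

noncomputable def Kc (i : Fin 3) (y : E3) : ℝ := (‖y‖ ^ 3)⁻¹ * y i

noncomputable def pd (i : Fin 3) (g : E3 → ℝ) (x : E3) : ℝ := fderiv ℝ g x (basis3 i)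

noncomputable def Cv (i : Fin 3) (g : E3 → ℝ) (x : E3) : ℝ := ∫ y, Kc i y * g (x - y)

lemma measurable_Kc (i : Fin 3) : Measurable (Kc i) := by
  unfold Kc
  have : Continuous (fun y : E3 => y i) := by fun_prop
  exact ((measurable_norm.pow_const 3).inv).mul this.measurable

lemma abs_Kc_le (i : Fin 3) (y : E3) : ‖Kc i y‖ ≤ (‖y‖ ^ 2)⁻¹ := by
  unfold Kc
  rw [norm_mul, norm_inv, norm_pow, norm_norm]
  have h := PiLp.norm_apply_le y i
  rcases eq_or_ne y 0 with rfl | hy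
  · simp
  · have : 0 < ‖y‖ := by positivity
    calc _ ≤ (‖y‖ ^ 3)⁻¹ * ‖y‖ := by gcongr
      _ = _ := by field_simp

lemma locInt_Kc (i : Fin 3) : LocallyIntegrable (Kc i) := by
  have key : ∀ r : ℝ, IntegrableOn (Kc i) (Metric.ball (0 : E3) r) := by
    intro r
    have h1 : IntegrableOn (fun x : E3 => (‖x‖ ^ 2)⁻¹) (Metric.ball (0 : E3) r) := by
      rw [integrableOn_fun_norm_addHaar volume (f := fun t : ℝ => (t ^ 2)⁻¹)]
      have : IntegrableOn (fun _ : ℝ => (1 : ℝ)) (Set.Ioo 0 r) := by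
        simp [integrableOn_const_iff]
      refine this.congr_fun ?_ measurableSet_Ioo
      intro t ht
      have := ht.1
      simp only [finrank_euclideanSpace, Fintype.card_fin, smul_eq_mul]
      field_simp
    exact h1.mono' (measurable_Kc i).aestronglyMeasurable (.of_forall fun y => abs_Kc_le i y)
  intro x
  exact ⟨Metric.ball 0 (‖x‖ + 1), Metric.isOpen_ball.mem_nhds (by simp), key _⟩

lemma int_Kc_mul (i : Fin 3) {h : E3 → ℝ} (hc : Continuous h) (hs : HasCompactSupport h) :
    Integrable (fun y => Kc i y * h y) := by
  have := (locInt_Kc i).integrable_smul_left_of_hasCompactSupport hc hs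
  simpa [smul_eq_mul, mul_comm] using this

lemma Cv_eq_conv (i : Fin 3) (g : E3 → ℝ) :
    Cv i g = convolution (Kc i) g (ContinuousLinearMap.mul ℝ ℝ) volume := by
  ext x; rfl

lemma contDiff_Cv (i : Fin 3) {g : E3 → ℝ} (hg : ContDiff ℝ (⊤ : ℕ∞) g)
    (hs : HasCompactSupport g) : ContDiff ℝ (⊤ : ℕ∞) (Cv i g) := by
  rw [Cv_eq_conv]
  exact hs.contDiff_convolution_right _ (locInt_Kc i) hg

lemma pd_Cv (i j : Fin 3) {g : E3 → ℝ} (hg : ContDiff ℝ (⊤ : ℕ∞) g)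
    (hs : HasCompactSupport g) (x : E3) : pd j (Cv i g) x = Cv i (pd j g) x := by
  have hg1 : ContDiff ℝ 1 g := hg.of_le (by norm_cast)
  unfold pd
  rw [Cv_eq_conv, (hs.hasFDerivAt_convolution_right (ContinuousLinearMap.mul ℝ ℝ)
    (locInt_Kc i) hg1 x).fderiv,
    convolution_precompR_apply _ (locInt_Kc i) (hs.fderiv ℝ)
      (hg1.continuous_fderiv one_ne_zero)]
  rfl

noncomputable def psi (ε : ℝ) (y : E3) : ℝ := (√(‖y‖ ^ 2 + ε))⁻¹

lemma hasFDerivAt_psi {ε : ℝ} (hε : 0 < ε) (y : E3) :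
    HasFDerivAt (psi ε) (-((√(‖y‖ ^ 2 + ε)) ^ 3)⁻¹ • innerSL ℝ y) y := by
  have h0 : 0 < ‖y‖ ^ 2 + ε := by positivity
  have h1 : HasFDerivAt (fun y : E3 => ‖y‖ ^ 2 + ε) (2 • innerSL ℝ y) y :=
    (hasStrictFDerivAt_norm_sq y).hasFDerivAt.add_const ε
  have h2 := (h1.sqrt h0.ne')
  have hs : 0 < √(‖y‖ ^ 2 + ε) := Real.sqrt_pos.2 h0
  have h3 := (hasDerivAt_inv hs.ne').comp_hasFDerivAt y h2
  refine h3.congr_fderiv ?_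
  ext v
  simp
  field_simp

lemma psi_contDiff {ε : ℝ} (hε : 0 < ε) : ContDiff ℝ 1 (psi ε) := by
  unfold psi
  have h0 : ∀ y : E3, ‖y‖ ^ 2 + ε ≠ 0 := fun y => by positivity
  refine ContDiff.inv (ContDiff.sqrt ((contDiff_norm_sq ℝ).add contDiff_const) h0) ?_
  intro y
  have h0 : 0 < ‖y‖ ^ 2 + ε := by positivity
  exact (Real.sqrt_pos.2 h0).ne'

lemma pd_psi {ε : ℝ} (hε : 0 < ε) (i : Fin 3) (y : E3) :
    pd i (psi ε) y = -(((√(‖y‖ ^ 2 + ε)) ^ 3)⁻¹ * y i) := by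
  unfold pd
  rw [(hasFDerivAt_psi hε y).fderiv]
  simp [basis3, EuclideanSpace.inner_single_right]

lemma pd_contDiff (i : Fin 3) {h : E3 → ℝ} (hh : ContDiff ℝ (⊤ : ℕ∞) h) :
    ContDiff ℝ (⊤ : ℕ∞) (pd i h) := by
  unfold pd
  exact (hh.fderiv_right (m := (⊤ : ℕ∞)) (by simp)).clm_apply contDiff_const

lemma pd_hcs (i : Fin 3) {h : E3 → ℝ} (hs : HasCompactSupport h) :
    HasCompactSupport (pd i h) := hs.fderiv_apply ℝ (basis3 i)

lemma pd_comm (i j : Fin 3) {h : E3 → ℝ} (hh : ContDiff ℝ (⊤ : ℕ∞) h) (y : E3) :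
    pd i (pd j h) y = pd j (pd i h) y := by
  have hd : DifferentiableAt ℝ (fderiv ℝ h) y :=
    ((hh.fderiv_right (m := (⊤ : ℕ∞)) (by simp)).differentiable (by simp)) y
  have e : ∀ k : Fin 3, fderiv ℝ (pd k h) y = (fderiv ℝ (fderiv ℝ h) y).flip (basis3 k) := by
    intro k
    have := hd.hasFDerivAt.clm_apply (hasFDerivAt_const (basis3 k) y)
    unfold pd
    rw [this.fderiv]
    ext v; simp
  unfold pd at e ⊢
  rw [e, e]
  have := (hh.contDiffAt (x := y)).isSymmSndFDerivAt (by simp; norm_cast)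
  exact this _ _

lemma ibp {ε : ℝ} (hε : 0 < ε) (i : Fin 3) {h : E3 → ℝ} (hh : ContDiff ℝ (⊤ : ℕ∞) h)
    (hs : HasCompactSupport h) :
    ∫ y, psi ε y * pd i h y = - ∫ y, pd i (psi ε) y * h y := by
  have c1 : Continuous (psi ε) := (psi_contDiff hε).continuous
  have c2 : Continuous (pd i (psi ε)) :=
    ((psi_contDiff hε).continuous_fderiv one_ne_zero).clm_apply continuous_const
  refine integral_mul_fderiv_eq_neg_fderiv_mul_of_integrable ?_ ?_ ?_ ?_ ?_
  · exact (c2.mul hh.continuous).integrable_of_hasCompactSupport hs.mul_left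
  · exact (c1.mul (pd_contDiff i hh).continuous).integrable_of_hasCompactSupport
      (pd_hcs i hs).mul_left
  · exact (c1.mul hh.continuous).integrable_of_hasCompactSupport hs.mul_left
  · exact fun x _ => (psi_contDiff hε).differentiable (by simp) x
  · exact fun x _ => hh.differentiable (by simp) x

lemma lim_psi (i : Fin 3) {h : E3 → ℝ} (hh : ContDiff ℝ (⊤ : ℕ∞) h)
    (hs : HasCompactSupport h) :
    Filter.Tendsto (fun ε => ∫ y, pd i (psi ε) y * h y) (nhdsWithin 0 (Set.Ioi 0))
      (nhds (∫ y, -(Kc i y * h y))) := by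
  refine tendsto_integral_filter_of_dominated_convergence (fun y => ‖Kc i y * h y‖) ?_ ?_ ?_ ?_
  · filter_upwards [self_mem_nhdsWithin] with ε hε
    have c2 : Continuous (pd i (psi ε)) :=
      ((psi_contDiff hε).continuous_fderiv one_ne_zero).clm_apply continuous_const
    exact (c2.mul hh.continuous).aestronglyMeasurable
  · filter_upwards [self_mem_nhdsWithin] with ε hε
    refine .of_forall fun y => ?_
    have hε : 0 < ε := hε
    rw [pd_psi hε, norm_mul, norm_mul, norm_neg]
    unfold Kc
    rw [norm_mul, norm_mul]
    rcases eq_or_ne y 0 with rfl | hy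
    · simp
    have hy : 0 < ‖y‖ := by positivity
    gcongr ?_ * _ * _
    rw [norm_inv, norm_inv, norm_pow, norm_pow, norm_norm]
    gcongr
    rw [Real.norm_of_nonneg (Real.sqrt_nonneg _)]
    exact Real.le_sqrt_of_sq_le (by linarith)
  · exact (int_Kc_mul i hh.continuous hs).norm
  · refine .of_forall fun y => ?_
    have : Filter.Tendsto (fun ε => -(((√(‖y‖ ^ 2 + ε)) ^ 3)⁻¹ * y i) * h y)
        (nhdsWithin 0 (Set.Ioi 0)) (nhds (-(Kc i y * h y))) := by
      rcases eq_or_ne y 0 with rfl | hy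
      · simp [Kc]
      have hy : 0 < ‖y‖ := by positivity
      have : ContinuousAt (fun ε => -(((√(‖y‖ ^ 2 + ε)) ^ 3)⁻¹ * y i) * h y) 0 := by
        have : (√(‖y‖ ^ 2 + 0)) ^ 3 ≠ 0 := by simp [hy.ne']
        fun_prop (disch := assumption)
      have := this.tendsto
      simp only [add_zero, Real.sqrt_sq hy.le, neg_mul] at this
      simp only [neg_mul]
      exact this.mono_left nhdsWithin_le_nhds
    refine this.congr' ?_
    filter_upwards [self_mem_nhdsWithin] with ε hε
    rw [pd_psi hε]

lemma K_sym (i j : Fin 3) {h : E3 → ℝ} (hh : ContDiff ℝ (⊤ : ℕ∞) h)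
    (hs : HasCompactSupport h) :
    ∫ y, Kc i y * pd j h y = ∫ y, Kc j y * pd i h y := by
  have h1 := lim_psi i (pd_contDiff j hh) (pd_hcs j hs)
  have h2 := lim_psi j (pd_contDiff i hh) (pd_hcs i hs)
  have h3 := h1.congr' (f₂ := fun ε => ∫ y, pd j (psi ε) y * pd i h y) (by
    filter_upwards [self_mem_nhdsWithin] with ε hε
    have e1 := ibp hε i (pd_contDiff j hh) (pd_hcs j hs)
    have e2 := ibp hε j (pd_contDiff i hh) (pd_hcs i hs)
    simp only [pd_comm i j hh] at e1
    linarith)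
  have := tendsto_nhds_unique h3 h2
  simpa only [integral_neg, neg_inj] using this

lemma pd_refl (i : Fin 3) {g : E3 → ℝ} (hg : ContDiff ℝ (⊤ : ℕ∞) g) (x y : E3) :
    pd i (fun y => g (x - y)) y = - pd i g (x - y) := by
  unfold pd
  have h1 : HasFDerivAt g (fderiv ℝ g (x - y)) (x - y) :=
    (hg.differentiable (by simp) _).hasFDerivAt
  have h2 : HasFDerivAt (fun y : E3 => x - y) (-ContinuousLinearMap.id ℝ E3) y :=
    (hasFDerivAt_id y).const_sub x
  have h3 : HasFDerivAt (fun y => g (x - y)) _ y := h1.comp y h2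
  rw [h3.fderiv]
  simp

lemma refl_hcs {g : E3 → ℝ} (hs : HasCompactSupport g) (x : E3) :
    HasCompactSupport (fun y => g (x - y)) :=
  hs.comp_homeomorph (Homeomorph.subLeft x)

lemma Cv_sym (i j : Fin 3) {g : E3 → ℝ} (hg : ContDiff ℝ (⊤ : ℕ∞) g)
    (hs : HasCompactSupport g) (x : E3) : Cv i (pd j g) x = Cv j (pd i g) x := by
  have := K_sym i j (h := fun y => g (x - y)) (hg.comp (contDiff_const.sub contDiff_id))
    (refl_hcs hs x)
  simp only [pd_refl _ hg, mul_neg, integral_neg, neg_inj] at this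
  exact this

lemma polar (F : E3 → ℝ) (hF : Integrable F) :
    ∫ y, F y = ∫ s : Metric.sphere (0 : E3) 1, ∫ r in Set.Ioi (0 : ℝ), r ^ 2 * F (r • s.1)
      ∂volume ∂(volume : Measure E3).toSphere := by
  have mp := (volume : Measure E3).measurePreserving_homeomorphUnitSphereProd
  have me := (homeomorphUnitSphereProd E3).measurableEmbedding
  let G : Metric.sphere (0 : E3) 1 × Set.Ioi (0 : ℝ) → ℝ := fun p => F (p.2.1 • p.1.1)
  have hG : ∀ x : ({0}ᶜ : Set E3), G (homeomorphUnitSphereProd E3 x) = F x := by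
    intro x
    have := homeomorphUnitSphereProd_symm_apply_coe E3 (homeomorphUnitSphereProd E3 x)
    simp only [Homeomorph.symm_apply_apply] at this
    simp only [G]
    rw [← this]
  have i1 : Integrable (fun x : ({0}ᶜ : Set E3) => F x) ((volume : Measure E3).comap (↑)) := by
    have := (integrableOn_iff_comap_subtypeVal (f := F) (μ := volume)
      (measurableSet_singleton (0 : E3)).compl).1 hF.integrableOn
    exact this
  have i2 := (mp.integrable_comp_emb me (g := G)).1 (by
    refine i1.congr (.of_forall fun x => (hG x).symm))
  calc ∫ y, F y = ∫ x : ({0}ᶜ : Set E3), F x ∂((volume : Measure E3).comap (↑)) := by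
        rw [integral_subtype_comap (measurableSet_singleton _).compl F, restrict_compl_singleton]
    _ = ∫ p, G p ∂((volume : Measure E3).toSphere.prod (.volumeIoiPow 2)) := by
        have := mp.integral_comp me G
        simp only [hG, finrank_euclideanSpace, Fintype.card_fin] at this
        exact this
    _ = ∫ s, ∫ r, G (s, r) ∂(.volumeIoiPow 2) ∂(volume : Measure E3).toSphere := by
        refine integral_prod _ ?_
        simpa only [finrank_euclideanSpace, Fintype.card_fin] using i2
    _ = _ := by
        congr 1
        ext s
        simp only [Measure.volumeIoiPow, ENNReal.ofReal, G]
        rw [integral_withDensity_eq_integral_smul,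
          integral_subtype_comap measurableSet_Ioi
            fun a ↦ Real.toNNReal (a ^ 2) • F (a • s.1),
          setIntegral_congr_fun measurableSet_Ioi fun x hx ↦ ?_]
        · rw [NNReal.smul_def, Real.coe_toNNReal _ (by positivity), smul_eq_mul]
        · exact (measurable_subtype_coe.pow_const _).real_toNNReal

lemma sum_pd (g : E3 → ℝ) (z y : E3) :
    ∑ i, y i * pd i g z = fderiv ℝ g z y := by
  have : y = ∑ i, y i • basis3 i := by
    ext j
    fin_cases j <;> simp [basis3, Fin.sum_univ_three]
  conv_rhs => rw [this]
  simp only [map_sum, map_smul, smul_eq_mul, pd]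

lemma Cv_div {g : E3 → ℝ} (hg : ContDiff ℝ (⊤ : ℕ∞) g)
    (hs : HasCompactSupport g) (x : E3) : ∑ i, Cv i (pd i g) x = 4 * π * g x := by
  have hint : ∀ i ∈ Finset.univ, Integrable (fun y => Kc i y * pd i g (x - y)) := fun i _ =>
    int_Kc_mul i (h := fun y => pd i g (x - y))
      ((pd_contDiff i hg).continuous.comp (by fun_prop)) (refl_hcs (pd_hcs i hs) x)
  unfold Cv
  rw [← integral_finsetSum _ hint, polar _ (integrable_finsetSum _ hint)]
  have key : ∀ s : Metric.sphere (0 : E3) 1, ∫ r in Set.Ioi (0 : ℝ),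
      r ^ 2 * ∑ i, Kc i (r • s.1) * pd i g (x - r • s.1) = g x := by
    intro s
    have hs1 : ‖s.1‖ = 1 := by simpa using s.2
    let φ : ℝ → ℝ := fun r => g (x - r • s.1)
    have hφ : ContDiff ℝ 1 φ := by
      have hg1 : ContDiff ℝ 1 g := hg.of_le (by norm_cast)
      exact hg1.comp (by fun_prop)
    have hφd : ∀ r, deriv φ r = - fderiv ℝ g (x - r • s.1) s.1 := by
      intro r
      have h1 : HasFDerivAt g (fderiv ℝ g (x - r • s.1)) (x - r • s.1) :=
        (hg.differentiable (by simp) _).hasFDerivAt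
      have h2 : HasDerivAt (fun r : ℝ => x - r • s.1) (-((1 : ℝ) • s.1)) r :=
        ((hasDerivAt_id r).smul_const s.1).const_sub x
      have h3 : HasDerivAt φ _ r := h1.comp_hasDerivAt r h2
      rw [h3.deriv]
      simp
    have hφs : HasCompactSupport φ := by
      refine (refl_hcs hs x).comp_isClosedEmbedding (g := fun r : ℝ => r • s.1) ?_
      refine isClosedEmbedding_smul_left ?_
      intro h0
      simp [h0] at hs1
    have e : ∀ r ∈ Set.Ioi (0 : ℝ),
        r ^ 2 * ∑ i, Kc i (r • s.1) * pd i g (x - r • s.1) = - deriv φ r := by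
      intro r hr
      have hr : 0 < r := hr
      rw [hφd, neg_neg, ← sum_pd, Finset.mul_sum]
      refine Finset.sum_congr rfl fun i _ => ?_
      simp only [Kc, norm_smul, hs1, Real.norm_of_nonneg hr.le, PiLp.smul_apply, smul_eq_mul]
      field_simp
    rw [setIntegral_congr_fun measurableSet_Ioi e, integral_neg,
      hφs.integral_Ioi_deriv_eq hφ 0]
    simp [φ]
  have hb : (volume : Measure E3).real (Metric.ball 0 1) = π * 4 / 3 := by
    rw [measureReal_def, EuclideanSpace.volume_ball_fin_three]
    have : 0 ≤ π * 4 / 3 := by positivity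
    simp [ENNReal.toReal_ofReal, this]
  simp only [key, integral_const, Measure.toSphere_real_apply_univ, smul_eq_mul, hb,
    finrank_euclideanSpace, Fintype.card_fin]
  push_cast
  ring

lemma fderiv_comp_coord {U : E3 → E3} (hU : ContDiff ℝ (⊤ : ℕ∞) U) (x : E3) (i j : Fin 3) :
    fderiv ℝ U x (basis3 i) j = pd i (fun x => U x j) x := by
  have h1 : HasFDerivAt U (fderiv ℝ U x) x := (hU.differentiable (by simp) x).hasFDerivAt
  have h2 : HasFDerivAt (fun x => U x j)
      ((EuclideanSpace.proj j : E3 →L[ℝ] ℝ).comp (fderiv ℝ U x)) x :=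
    (EuclideanSpace.proj j : E3 →L[ℝ] ℝ).hasFDerivAt.comp x h1
  unfold pd
  rw [h2.fderiv]
  rfl

lemma pd_comb (c : ℝ) (i a b : Fin 3) {f g : E3 → ℝ} (hf : ContDiff ℝ (⊤ : ℕ∞) f)
    (hfs : HasCompactSupport f) (hg : ContDiff ℝ (⊤ : ℕ∞) g) (hgs : HasCompactSupport g)
    (x : E3) :
    pd i (fun x => c * (Cv a f x - Cv b g x)) x = c * (Cv a (pd i f) x - Cv b (pd i g) x) := by
  have h1 : HasFDerivAt (Cv a f) (fderiv ℝ (Cv a f) x) x :=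
    ((contDiff_Cv a hf hfs).differentiable (by simp) x).hasFDerivAt
  have h2 : HasFDerivAt (Cv b g) (fderiv ℝ (Cv b g) x) x :=
    ((contDiff_Cv b hg hgs).differentiable (by simp) x).hasFDerivAt
  have h3 : HasFDerivAt (fun x => c * (Cv a f x - Cv b g x)) _ x := (h1.sub h2).const_mul c
  rw [← pd_Cv a i hf hfs, ← pd_Cv b i hg hgs]
  unfold pd
  rw [h3.fderiv]
  simp

lemma bs_coord {w : E3 → E3} (hw : ContDiff ℝ (⊤ : ℕ∞) w) (hs : HasCompactSupport w)
    (x : E3) (j : Fin 3) :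
    (∫ x' : E3, (‖x - x'‖ ^ 3)⁻¹ • cross3 (x - x') (w x')) j =
      ![Cv 1 (fun z => w z 2) x - Cv 2 (fun z => w z 1) x,
        Cv 2 (fun z => w z 0) x - Cv 0 (fun z => w z 2) x,
        Cv 0 (fun z => w z 1) x - Cv 1 (fun z => w z 0) x] j := by
  have hI : ∀ a b : Fin 3, Integrable (fun y => Kc a y * w (x - y) b) := fun a b =>
    int_Kc_mul a (h := fun y => w (x - y) b)
      (by have := hw.continuous; fun_prop)
      (refl_hcs (g := fun z => w z b) (hs.comp_left (g := fun v : E3 => v b) rfl) x)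
  have h1 : (∫ x' : E3, (‖x - x'‖ ^ 3)⁻¹ • cross3 (x - x') (w x')) =
      ∫ y : E3, (‖y‖ ^ 3)⁻¹ • cross3 y (w (x - y)) := by
    rw [← integral_sub_left_eq_self _ volume x]
    simp
  have e : ∀ (y : E3) (j : Fin 3), ((‖y‖ ^ 3)⁻¹ • cross3 y (w (x - y))) j =
      ![Kc 1 y * w (x - y) 2 - Kc 2 y * w (x - y) 1,
        Kc 2 y * w (x - y) 0 - Kc 0 y * w (x - y) 2,
        Kc 0 y * w (x - y) 1 - Kc 1 y * w (x - y) 0] j := by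
    intro y j
    fin_cases j <;> simp [cross3, Kc] <;> ring
  have hJ : ∀ j : Fin 3, Integrable (fun y : E3 => ((‖y‖ ^ 3)⁻¹ • cross3 y (w (x - y))) j) := by
    intro j
    simp only [e]
    fin_cases j
    · exact (hI 1 2).sub (hI 2 1)
    · exact (hI 2 0).sub (hI 0 2)
    · exact (hI 0 1).sub (hI 1 0)
  rw [h1, eval_integral_piLp hJ]
  simp only [e]
  fin_cases j
  · exact integral_sub (hI 1 2) (hI 2 1)
  · exact integral_sub (hI 2 0) (hI 0 2)
  · exact integral_sub (hI 0 1) (hI 1 0)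

/-- **The Biot–Savart field is a smooth divergence-free vector potential inverse of the curl.**
For a smooth, compactly supported, divergence-free `ω : ℝ³ → ℝ³`, the Biot–Savart field
`V(x) = -(1/4π) ∫ ((x - x′) × ω(x′))/‖x - x′‖³ dx′` is smooth, divergence-free, and
satisfies `∇ × V = ω` on `ℝ³`. -/
theorem biot_savart_solves_curl_system
    (ω : EuclideanSpace ℝ (Fin 3) → EuclideanSpace ℝ (Fin 3))
    (hω : ContDiff ℝ (⊤ : ℕ∞) ω) (hsupp : HasCompactSupport ω)
    (hdivω : ∀ x, div3 ω x = 0)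
    (V : EuclideanSpace ℝ (Fin 3) → EuclideanSpace ℝ (Fin 3))
    (hV : ∀ x, V x = (-(4 * π)⁻¹ : ℝ) •
      ∫ x' : EuclideanSpace ℝ (Fin 3), (‖x - x'‖ ^ 3)⁻¹ • cross3 (x - x') (ω x')) :
    ContDiff ℝ (⊤ : ℕ∞) V ∧ (∀ x, div3 V x = 0) ∧ (∀ x, curl3 V x = ω x) := by
  have hw : ∀ j : Fin 3, ContDiff ℝ (⊤ : ℕ∞) (fun z => ω z j) := contDiff_euclidean.1 hω
  have hs : ∀ j : Fin 3, HasCompactSupport (fun z => ω z j) := fun j =>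
    hsupp.comp_left (g := fun v : E3 => v j) rfl
  have hc : ∀ x (j : Fin 3), V x j = (-(4 * π)⁻¹ : ℝ) *
      ![Cv 1 (fun z => ω z 2) x - Cv 2 (fun z => ω z 1) x,
        Cv 2 (fun z => ω z 0) x - Cv 0 (fun z => ω z 2) x,
        Cv 0 (fun z => ω z 1) x - Cv 1 (fun z => ω z 0) x] j := by
    intro x j
    rw [hV, PiLp.smul_apply, bs_coord hω hsupp, smul_eq_mul]
  have f0 : (fun x => V x 0) = fun x => (-(4 * π)⁻¹ : ℝ) *
      (Cv 1 (fun z => ω z 2) x - Cv 2 (fun z => ω z 1) x) := funext fun x => hc x 0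
  have f1 : (fun x => V x 1) = fun x => (-(4 * π)⁻¹ : ℝ) *
      (Cv 2 (fun z => ω z 0) x - Cv 0 (fun z => ω z 2) x) := funext fun x => hc x 1
  have f2 : (fun x => V x 2) = fun x => (-(4 * π)⁻¹ : ℝ) *
      (Cv 0 (fun z => ω z 1) x - Cv 1 (fun z => ω z 0) x) := funext fun x => hc x 2
  have hVd : ContDiff ℝ (⊤ : ℕ∞) V := by
    rw [contDiff_euclidean]
    have := fun i j => contDiff_Cv i (hw j) (hs j)
    intro j
    fin_cases j
    · exact f0 ▸ contDiff_const.mul ((this 1 2).sub (this 2 1))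
    · exact f1 ▸ contDiff_const.mul ((this 2 0).sub (this 0 2))
    · exact f2 ▸ contDiff_const.mul ((this 0 1).sub (this 1 0))
  have d0 : ∀ x i, fderiv ℝ V x (basis3 i) 0 = (-(4 * π)⁻¹ : ℝ) *
      (Cv 1 (pd i fun z => ω z 2) x - Cv 2 (pd i fun z => ω z 1) x) := fun x i => by
    rw [fderiv_comp_coord hVd, f0, pd_comb _ _ _ _ (hw _) (hs _) (hw _) (hs _)]
  have d1 : ∀ x i, fderiv ℝ V x (basis3 i) 1 = (-(4 * π)⁻¹ : ℝ) *
      (Cv 2 (pd i fun z => ω z 0) x - Cv 0 (pd i fun z => ω z 2) x) := fun x i => by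
    rw [fderiv_comp_coord hVd, f1, pd_comb _ _ _ _ (hw _) (hs _) (hw _) (hs _)]
  have d2 : ∀ x i, fderiv ℝ V x (basis3 i) 2 = (-(4 * π)⁻¹ : ℝ) *
      (Cv 0 (pd i fun z => ω z 1) x - Cv 1 (pd i fun z => ω z 0) x) := fun x i => by
    rw [fderiv_comp_coord hVd, f2, pd_comb _ _ _ _ (hw _) (hs _) (hw _) (hs _)]
  have hdv : ∀ x a, Cv a (pd 0 fun z => ω z 0) x + Cv a (pd 1 fun z => ω z 1) x
      + Cv a (pd 2 fun z => ω z 2) x = 0 := by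
    intro x a
    have hint : ∀ i : Fin 3, Integrable (fun y => Kc a y * pd i (fun z => ω z i) (x - y)) :=
      fun i => int_Kc_mul a (h := fun y => pd i (fun z => ω z i) (x - y))
        ((pd_contDiff i (hw i)).continuous.comp (by fun_prop)) (refl_hcs (pd_hcs i (hs i)) x)
    unfold Cv
    have hsum := integral_finsetSum (μ := volume) Finset.univ (fun i _ => hint i)
    simp only [Fin.sum_univ_three] at hsum
    rw [← hsum, ← integral_zero E3 ℝ (μ := volume)]
    congr 1
    ext y
    have := hdivω (x - y)
    simp only [div3, Fin.sum_univ_three, fderiv_comp_coord hω] at this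
    rw [← mul_add, ← mul_add, this, mul_zero]
  have h4 : ∀ x j, Cv 0 (pd 0 fun z => ω z j) x + Cv 1 (pd 1 fun z => ω z j) x
      + Cv 2 (pd 2 fun z => ω z j) x = 4 * π * ω x j := by
    intro x j
    rw [← Cv_div (hw j) (hs j) x, Fin.sum_univ_three]
  have sy : ∀ x i j k, Cv i (pd j fun z => ω z k) x = Cv j (pd i fun z => ω z k) x :=
    fun x i j k => Cv_sym i j (hw k) (hs k) x
  have hpi : (4 * π) ≠ 0 := by positivity
  refine ⟨hVd, ?_, ?_⟩
  · intro x
    simp only [div3, Fin.sum_univ_three, d0, d1, d2]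
    rw [sy x 1 0 2, sy x 2 0 1, sy x 2 1 0]
    ring
  · intro x
    ext j
    have hω' : ω x j = (4 * π)⁻¹ * (4 * π * ω x j) := by field_simp
    rw [hω', ← h4 x j]
    have hd := hdv x j
    fin_cases j
    · simp [curl3, d0, d1, d2] at hd ⊢
      linear_combination (-(4 * π)⁻¹) * hd
    · simp [curl3, d0, d1, d2] at hd ⊢
      linear_combination (-(4 * π)⁻¹) * hd
    · simp [curl3, d0, d1, d2] at hd ⊢
      linear_combination (-(4 * π)⁻¹) * hd
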